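/- arXiv:0905.2245 — 4 statements merged into one kernel-verified Lean document; each statement's English description precedes it below -/
import Mathlib

section
/- Let R be a basic left Harada algebra with modules P_{ij} := rad^{j-1}(e_{i1}R) as below, and let f : P_{ij} → P_{kl} be a homomorphism of right R-modules (1 ≤ i,k ≤ m, 1 ≤ j ≤ n_i, 1 ≤ l ≤ n_k). Then f is injective if and only if i = k, j ≥ l, and the image of f equals P_{kj} (as submodules of e_{k1}R). -/
/-!
Common setup.  `K` is an algebraically closed field and `R` a finite-dimensional associative
unital `K`-algebra.  Right `R`-modules are formalized as modules over the opposite ring `Rᵐᵒᵖ`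
(so that `MulOpposite.op r • x = x * r`).
-/

open MulOpposite

/-- The right ideal `xR` of a ring `R`, as a submodule of `R` over `Rᵐᵒᵖ`. -/
def rightIdeal (R : Type) [Ring R] (x : R) : Submodule Rᵐᵒᵖ R :=
  Submodule.span Rᵐᵒᵖ {x}

/-- The Jacobson radical of a submodule `N` (the intersection of the maximal submodules of the
module `N`), viewed as a submodule of the ambient module.  Iterating this operation gives the
iterated radicals `rad^k`. -/
def radSub {A M : Type} [Ring A] [AddCommGroup M] [Module A M] (N : Submodule A M) :
    Submodule A M :=
  Submodule.map N.subtype (sInf {P : Submodule A ↥N | IsCoatom P})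

/-- A module is indecomposable if it is nonzero and admits no nontrivial direct sum
decomposition. -/
def IsIndecomposableMod (A M : Type) [Ring A] [AddCommGroup M] [Module A M] : Prop :=
  Nontrivial M ∧ ∀ N N' : Submodule A M, IsCompl N N' → N = ⊥ ∨ N' = ⊥

/-- A module has projective dimension at most one iff it admits a surjection from a projective
module with projective kernel. -/
def PdLeOne (A : Type) [Ring A] (M : Type) [AddCommGroup M] [Module A M] : Prop :=
  ∃ (P : ModuleCat.{0} A) (f : ↥P →ₗ[A] M),
    Module.Projective A ↥P ∧ Function.Surjective f ∧
      Module.Projective A ↥(LinearMap.ker f)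

/-- `Ext¹_A(M,N) = 0`, expressed by the splitting of every short exact sequence
`0 → N → E → M → 0`. -/
def Ext1Zero (A : Type) [Ring A] (M N : Type) [AddCommGroup M] [Module A M]
    [AddCommGroup N] [Module A N] : Prop :=
  ∀ (E : ModuleCat.{0} A) (i : N →ₗ[A] ↥E) (p : ↥E →ₗ[A] M),
    Function.Injective i → Function.Surjective p → LinearMap.range i = LinearMap.ker p →
    ∃ s : M →ₗ[A] ↥E, p.comp s = LinearMap.id

/-- `X ∈ add T` : `X` is a direct summand of a finite direct sum of copies of `T`. -/
def InAdd (A : Type) [Ring A] (T X : Type) [AddCommGroup T] [Module A T]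
    [AddCommGroup X] [Module A X] : Prop :=
  ∃ (k : ℕ) (f : X →ₗ[A] (Fin k → T)) (g : (Fin k → T) →ₗ[A] X),
    g.comp f = LinearMap.id

/-- `T` is a (finitely generated) tilting right `R`-module: projective dimension at most one,
no self-extensions, and there is a short exact sequence `0 → R → T₀ → T₁ → 0` with
`T₀, T₁ ∈ add T`. -/
def IsTiltingRight (R : Type) [Ring R] (T : Type) [AddCommGroup T] [Module Rᵐᵒᵖ T] : Prop :=
  Module.Finite Rᵐᵒᵖ T ∧ PdLeOne Rᵐᵒᵖ T ∧ Ext1Zero Rᵐᵒᵖ T T ∧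
    ∃ (T₀ T₁ : ModuleCat.{0} Rᵐᵒᵖ) (f : R →ₗ[Rᵐᵒᵖ] ↥T₀) (g : ↥T₀ →ₗ[Rᵐᵒᵖ] ↥T₁),
      InAdd Rᵐᵒᵖ T ↥T₀ ∧ InAdd Rᵐᵒᵖ T ↥T₁ ∧
        Function.Injective f ∧ Function.Surjective g ∧ LinearMap.range f = LinearMap.ker g

/-- `T` is basic: it is an (internal) direct sum of pairwise non-isomorphic indecomposable
submodules. -/
def IsBasicMod (A : Type) [Ring A] (T : Type) [AddCommGroup T] [Module A T] : Prop :=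
  ∃ (k : ℕ) (N : Fin k → Submodule A T),
    DirectSum.IsInternal N ∧ (∀ a, IsIndecomposableMod A ↥(N a)) ∧
      ∀ a b, a ≠ b → IsEmpty (↥(N a) ≃ₗ[A] ↥(N b))

/-- The setoid identifying isomorphic modules (among those with property `P`). -/
def isoSetoid (A : Type) [Ring A] (P : ModuleCat.{0} A → Prop) :
    Setoid {M : ModuleCat.{0} A // P M} where
  r M N := Nonempty (↥M.1 ≃ₗ[A] ↥N.1)
  iseqv := ⟨fun M => ⟨LinearEquiv.refl A ↥M.1⟩, fun ⟨e⟩ => ⟨e.symm⟩,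
    fun ⟨e⟩ ⟨f⟩ => ⟨e.trans f⟩⟩

/-- The data exhibiting a ring `R` as a basic left Harada algebra:
a complete set `{e i j}` of orthogonal primitive idempotents with pairwise non-isomorphic
right ideals `(e i j)R` (`R` is basic), such that each `(e i 0)R` is an injective right
module, and `(e i j)R ≅ rad ((e i (j-1))R)` for `j ≥ 1`.  (Indices are shifted by one from
the paper: the paper's `e_{ij}` is `e i (j-1)` here.) -/
structure HaradaData (R : Type) [Ring R] : Type where
  m : ℕ
  hm : 0 < m
  n : Fin m → ℕ
  hn : ∀ i, 0 < n i
  e : (i : Fin m) → Fin (n i) → R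
  idem : ∀ i j, IsIdempotentElem (e i j)
  orth : ∀ p q : Σ i : Fin m, Fin (n i), p ≠ q → e p.1 p.2 * e q.1 q.2 = 0
  sum_eq_one : ∑ p : Σ i : Fin m, Fin (n i), e p.1 p.2 = 1
  indec : ∀ i j, IsIndecomposableMod Rᵐᵒᵖ ↥(rightIdeal R (e i j))
  basic : ∀ p q : Σ i : Fin m, Fin (n i), p ≠ q →
    IsEmpty (↥(rightIdeal R (e p.1 p.2)) ≃ₗ[Rᵐᵒᵖ] ↥(rightIdeal R (e q.1 q.2)))
  inj : ∀ i, Module.Injective Rᵐᵒᵖ ↥(rightIdeal R (e i ⟨0, hn i⟩))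
  rad_iso : ∀ (i : Fin m) (j : Fin (n i)), 0 < j.val →
    Nonempty (↥(rightIdeal R (e i j)) ≃ₗ[Rᵐᵒᵖ]
      ↥(radSub (rightIdeal R (e i ⟨j.val - 1, Nat.lt_of_le_of_lt (Nat.sub_le j.val 1) j.isLt⟩))))

variable {R : Type} [Ring R]

/-- `H.P i j = rad^j ((e i 0)R)`; this is the paper's `P_{i,j+1} = rad^j (e_{i1}R)`,
a submodule of `R`. -/
def HaradaData.P (H : HaradaData R) (i : Fin H.m) (j : Fin (H.n i)) : Submodule Rᵐᵒᵖ R :=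
  radSub^[j.val] (rightIdeal R (H.e i ⟨0, H.hn i⟩))

/-- The quotient module `P_{ik}/P_{il}` (for `l ≥ k` we have `H.P i l ≤ H.P i k`). -/
abbrev HaradaData.Quot (H : HaradaData R) (i : Fin H.m) (k l : Fin (H.n i)) : Type :=
  ↥(H.P i k) ⧸ Submodule.comap (H.P i k).subtype (H.P i l)

/-- The last index (the paper's `n_i`) in `Fin (H.n i)`. -/
def HaradaData.last (H : HaradaData R) (i : Fin H.m) : Fin (H.n i) :=
  ⟨H.n i - 1, Nat.sub_lt (H.hn i) one_pos⟩

/-- The right ideal `I = ⊕_{i,j} rad^{n_i - j + 1}(e_{ij}R)` of the paper. -/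
def HaradaData.I (H : HaradaData R) : Submodule Rᵐᵒᵖ R :=
  ⨆ p : Σ i : Fin H.m, Fin (H.n i),
    radSub^[H.n p.1 - p.2.val] (rightIdeal R (H.e p.1 p.2))

/-- The submodule `T·I` of a right module `T`, for `I` a right ideal of `R`. -/
def smulSub (I : Submodule Rᵐᵒᵖ R) (T : Type) [AddCommGroup T] [Module Rᵐᵒᵖ T] :
    Submodule Rᵐᵒᵖ T :=
  Submodule.span Rᵐᵒᵖ {x : T | ∃ (t : T) (r : R), r ∈ I ∧ x = op r • t}


theorem radSub_le {A M : Type} [Ring A] [AddCommGroup M] [Module A M] (N : Submodule A M) :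
    radSub N ≤ N := Submodule.map_subtype_le _ _

theorem radSub_iter_le {A M : Type} [Ring A] [AddCommGroup M] [Module A M] (N : Submodule A M)
    (k : ℕ) : radSub^[k] N ≤ N := by
  induction k with
  | zero => exact le_rfl
  | succ k ih => rw [Function.iterate_succ_apply']; exact (radSub_le _).trans ih

theorem radSub_map_mem {A M : Type} [Ring A] [AddCommGroup M] [Module A M]
    {N N' : Submodule A M} (φ : N ≃ₗ[A] N') (x : M) (hx : x ∈ radSub N) (hx' : x ∈ N) :
    (φ ⟨x, hx'⟩ : M) ∈ radSub N' := by
  obtain ⟨y, hy, rfl⟩ := hx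
  have h : Submodule.map φ.toLinearMap (Module.jacobson A N) = Module.jacobson A N' :=
    Module.map_jacobson_of_bijective φ.bijective
  refine ⟨φ y, ?_, rfl⟩
  change φ y ∈ Module.jacobson A N'
  rw [← h]
  exact ⟨y, hy, rfl⟩

theorem radSub_equiv {A M : Type} [Ring A] [AddCommGroup M] [Module A M]
    {N N' : Submodule A M} (φ : N ≃ₗ[A] N') :
    ∃ ψ : radSub N ≃ₗ[A] radSub N', ∀ x (hx : x ∈ radSub N) (hx' : x ∈ N),
      (ψ ⟨x, hx⟩ : M) = φ ⟨x, hx'⟩ := by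
  let F : radSub N →ₗ[A] radSub N' :=
    ((N'.subtype ∘ₗ φ.toLinearMap) ∘ₗ Submodule.inclusion (radSub_le N)).codRestrict (radSub N')
      (fun x => radSub_map_mem φ x.1 x.2 (radSub_le N x.2))
  let G : radSub N' →ₗ[A] radSub N :=
    ((N.subtype ∘ₗ φ.symm.toLinearMap) ∘ₗ Submodule.inclusion (radSub_le N')).codRestrict (radSub N)
      (fun x => radSub_map_mem φ.symm x.1 x.2 (radSub_le N' x.2))
  refine ⟨LinearEquiv.ofLinearMap F G ?_ ?_, fun x hx hx' => rfl⟩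
  · ext x
    change (φ (φ.symm ⟨x.1, radSub_le N' x.2⟩) : M) = x
    rw [φ.apply_symm_apply]
  · ext x
    change (φ.symm (φ ⟨x.1, radSub_le N x.2⟩) : M) = x
    rw [φ.symm_apply_apply]

theorem radSub_iter_equiv {A M : Type} [Ring A] [AddCommGroup M] [Module A M]
    {N N' : Submodule A M} (φ : N ≃ₗ[A] N') (k : ℕ) :
    ∃ ψ : (radSub^[k] N : Submodule A M) ≃ₗ[A] (radSub^[k] N' : Submodule A M),
      ∀ x (hx : x ∈ radSub^[k] N) (hx' : x ∈ N), (ψ ⟨x, hx⟩ : M) = φ ⟨x, hx'⟩ := by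
  induction k with
  | zero => exact ⟨φ, fun x hx hx' => rfl⟩
  | succ k ih =>
    obtain ⟨ψ, hψ⟩ := ih
    obtain ⟨χ, hχ⟩ := radSub_equiv ψ
    rw [Function.iterate_succ_apply', Function.iterate_succ_apply']
    exact ⟨χ, fun x hx hx' => (hχ x hx (radSub_le _ hx)).trans (hψ x _ hx')⟩

theorem HaradaData.P_iso (H : HaradaData R) (i : Fin H.m) (j : ℕ) (hj : j < H.n i) :
    Nonempty (H.P i ⟨j, hj⟩ ≃ₗ[Rᵐᵒᵖ] rightIdeal R (H.e i ⟨j, hj⟩)) := by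
  induction j with
  | zero => exact ⟨LinearEquiv.refl _ _⟩
  | succ j ih =>
    obtain ⟨φ⟩ := ih (by omega)
    obtain ⟨ψ, -⟩ := radSub_equiv φ
    obtain ⟨χ⟩ := H.rad_iso i ⟨j + 1, hj⟩ (Nat.succ_pos j)
    have h : H.P i ⟨j + 1, hj⟩ = radSub (H.P i ⟨j, by omega⟩) := by
      unfold HaradaData.P
      exact Function.iterate_succ_apply' _ _ _
    rw [h]
    exact ⟨ψ.trans χ.symm⟩

theorem fitting_inj {A M : Type} [Ring A] [AddCommGroup M] [Module A M] [IsNoetherian A M]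
    [IsArtinian A M] (hM : IsIndecomposableMod A M) (h : M →ₗ[A] M) (x : M) (hx : x ≠ 0)
    (hfix : h x = x) : Function.Injective h := by
  obtain ⟨n, hn⟩ := Filter.eventually_atTop.mp h.eventually_isCompl_ker_pow_range_pow
  have hc := hn (n + 1) (by omega)
  rcases hM.2 _ _ hc with h0 | h0
  · rw [← LinearMap.ker_eq_bot, eq_bot_iff, ← h0]
    intro y hy
    rw [LinearMap.mem_ker] at hy ⊢
    rw [pow_succ, Module.End.mul_apply, hy, map_zero]
  · exfalso
    apply hx
    have : x ∈ LinearMap.range (h ^ (n + 1)) := by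
      refine ⟨x, ?_⟩
      rw [Module.End.pow_apply]
      exact Function.iterate_fixed hfix _
    rw [h0] at this
    simpa using this

theorem extend_equiv {A E E' N : Type} [Ring A] [AddCommGroup E] [Module A E]
    [AddCommGroup E'] [Module A E'] [AddCommGroup N] [Module A N] [Nontrivial N]
    [IsNoetherian A E] [IsArtinian A E] [IsNoetherian A E'] [IsArtinian A E']
    (hE : IsIndecomposableMod A E) (hE' : IsIndecomposableMod A E')
    [hi : Module.Injective A E] [hi' : Module.Injective A E']
    (a : N →ₗ[A] E) (b : N →ₗ[A] E') (ha : Function.Injective a) (hb : Function.Injective b) :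
    ∃ φ : E ≃ₗ[A] E', ∀ x, φ (a x) = b x := by
  obtain ⟨g, hg⟩ := hi'.out a ha b
  obtain ⟨h, hh⟩ := hi.out b hb a
  obtain ⟨x, hx⟩ := exists_ne (0 : N)
  have h1 : Function.Injective (h ∘ₗ g) := fitting_inj hE _ (a x)
    (fun h0 => hx (ha (by rw [h0, map_zero]))) (by simp [hg, hh])
  have h2 : Function.Injective (g ∘ₗ h) := fitting_inj hE' _ (b x)
    (fun h0 => hx (hb (by rw [h0, map_zero]))) (by simp [hg, hh])
  have h3 := IsArtinian.surjective_of_injective_endomorphism _ h2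
  have hgi : Function.Injective g := fun u v huv => h1 (by simp [huv])
  have hgs : Function.Surjective g := fun y => by
    obtain ⟨z, hz⟩ := h3 y
    exact ⟨h z, hz⟩
  exact ⟨LinearEquiv.ofBijective g ⟨hgi, hgs⟩, hg⟩

/-- Lemma 2.2(1).  A homomorphism `f : P_{ij} → P_{kl}` is injective iff
`i = k`, `j ≥ l` and the image of `f` equals `P_{kj}` (as submodules of `e_{k1}R`). -/
theorem statement3 (K R : Type) [Field K] [IsAlgClosed K] [Ring R] [Algebra K R]
    [FiniteDimensional K R] (H : HaradaData R) (i k : Fin H.m)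
    (j : Fin (H.n i)) (l : Fin (H.n k))
    (f : ↥(H.P i j) →ₗ[Rᵐᵒᵖ] ↥(H.P k l)) :
    Function.Injective f ↔
      ∃ h : i = k, l.val ≤ j.val ∧
        Submodule.map (H.P k l).subtype (LinearMap.range f)
          = H.P k ⟨j.val, by subst h; exact j.isLt⟩ := by
  have hK : IsNoetherian Rᵐᵒᵖ R ∧ IsArtinian Rᵐᵒᵖ R := by
    haveI : IsScalarTower K Rᵐᵒᵖ R := ⟨fun c r x => by
      induction r using MulOpposite.rec' with
      | h r => rw [← MulOpposite.op_smul]; simp⟩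
    exact ⟨isNoetherian_of_tower K inferInstance, isArtinian_of_tower K inferInstance⟩
  obtain ⟨hN, hA⟩ := hK
  constructor
  · intro hf
    obtain ⟨ι⟩ := H.P_iso i j.1 j.2
    haveI : Nontrivial (H.P i j) := by
      haveI := (H.indec i j).1
      exact ι.toEquiv.nontrivial
    haveI := H.inj i
    haveI := H.inj k
    have hle : H.P i j ≤ rightIdeal R (H.e i ⟨0, H.hn i⟩) := radSub_iter_le _ _
    have hle' : H.P k l ≤ rightIdeal R (H.e k ⟨0, H.hn k⟩) := radSub_iter_le _ _
    obtain ⟨φ, hφ⟩ := extend_equiv (H.indec i ⟨0, H.hn i⟩) (H.indec k ⟨0, H.hn k⟩)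
      (Submodule.inclusion hle) (Submodule.inclusion hle' ∘ₗ f)
      (Submodule.inclusion_injective hle) ((Submodule.inclusion_injective hle').comp hf)
    have hik : i = k := by
      by_contra hne
      exact (H.basic ⟨i, ⟨0, H.hn i⟩⟩ ⟨k, ⟨0, H.hn k⟩⟩
        (fun h => hne (congrArg Sigma.fst h))).false φ
    subst hik
    obtain ⟨ψ, hψ⟩ := radSub_iter_equiv φ j.val
    have hval : ∀ x : H.P i j, (ψ x : R) = f x := fun x => by
      have h1 := hψ x.1 x.2 (hle x.2)
      have h2 := congrArg Subtype.val (hφ x)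
      exact h1.trans h2
    have hrange : Submodule.map (H.P i l).subtype (LinearMap.range f) = H.P i j := by
      ext y
      constructor
      · rintro ⟨_, ⟨x, rfl⟩, rfl⟩
        change (f x : R) ∈ _
        rw [← hval]
        exact (ψ x).2
      · intro hy
        refine ⟨f (ψ.symm ⟨y, hy⟩), ⟨_, rfl⟩, ?_⟩
        change (f (ψ.symm ⟨y, hy⟩) : R) = y
        exact (hval (ψ.symm ⟨y, hy⟩)).symm.trans
          (congrArg Subtype.val (ψ.apply_symm_apply ⟨y, hy⟩))
    refine ⟨rfl, ?_, hrange⟩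
    by_contra hlt
    have hjl : H.P i j ≤ H.P i l := by
      rw [← hrange]; exact Submodule.map_subtype_le _ _
    have hlj : H.P i l ≤ H.P i j := by
      have e : l.val = (l.val - j.val) + j.val := by omega
      unfold HaradaData.P
      rw [e, Function.iterate_add_apply]
      exact radSub_iter_le _ _
    have heq : H.P i j = H.P i l := le_antisymm hjl hlj
    obtain ⟨κ⟩ := H.P_iso i l.1 l.2
    have hne : (⟨i, j⟩ : Σ i : Fin H.m, Fin (H.n i)) ≠ ⟨i, l⟩ := by
      intro h
      have : j = l := by simpa using h
      exact hlt (by rw [this])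
    exact (H.basic _ _ hne).false
      ((ι.symm.trans (LinearEquiv.ofEq _ _ heq)).trans κ)
  · rintro ⟨h, -, hr⟩
    subst h
    have hr' : Submodule.map (H.P i l).subtype (LinearMap.range f) = H.P i j := hr
    let g : H.P i j →ₗ[Rᵐᵒᵖ] H.P i j := ((H.P i l).subtype ∘ₗ f).codRestrict (H.P i j)
      (fun x => hr'.le ⟨f x, ⟨x, rfl⟩, rfl⟩)
    have hg : Function.Surjective g := by
      rintro ⟨y, hy⟩
      have hy' := hy
      rw [← hr'] at hy'
      obtain ⟨_, ⟨x, rfl⟩, hx⟩ := hy'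
      exact ⟨x, Subtype.ext hx⟩
    have hgi := IsNoetherian.injective_of_surjective_endomorphism g hg
    intro u v huv
    apply hgi
    apply Subtype.ext
    change (f u : R) = f v
    rw [huv]
end

section
/- Let R be a basic left Harada algebra with modules P_{ij} := rad^{j-1}(e_{i1}R) as below, and let f : P_{ij} → P_{il} be an injective homomorphism of right R-modules with j ≥ l. Then for every non-injective homomorphism g : P_{ij} → P_{st} (any 1 ≤ s ≤ m, 1 ≤ t ≤ n_s), there exists a homomorphism h : P_{il} → P_{st} such that g = h ∘ f. -/
/-!
Common setup.  `K` is an algebraically closed field and `R` a finite-dimensional associative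
unital `K`-algebra.  Right `R`-modules are formalized as modules over the opposite ring `Rᵐᵒᵖ`
(so that `MulOpposite.op r • x = x * r`).
-/

open MulOpposite

variable {R : Type} [Ring R]

theorem proper_of_indec {A M : Type} [Ring A] [AddCommGroup M] [Module A M]
    [IsNoetherian A M] [IsArtinian A M] [Module.Projective A M]
    (h : IsIndecomposableMod A M) (N N' : Submodule A M) (hs : N ⊔ N' = ⊤) :
    N = ⊤ ∨ N' = ⊤ := by
  have hsurj : Function.Surjective (N.subtype.coprod N'.subtype) := by
    rw [← LinearMap.range_eq_top, LinearMap.range_coprod]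
    simpa using hs
  obtain ⟨σ, hσ⟩ := Module.projective_lifting_property _ LinearMap.id hsurj
  set a : Module.End A M := N.subtype ∘ₗ LinearMap.fst A N N' ∘ₗ σ with ha
  set b : Module.End A M := N'.subtype ∘ₗ LinearMap.snd A N N' ∘ₗ σ with hb
  have hab : a + b = 1 := by
    ext x
    have := LinearMap.congr_fun hσ x
    simpa [a, b, LinearMap.coprod_apply] using this
  have haN : ∀ x, a x ∈ N := fun x => (LinearMap.fst A N N' (σ x)).2
  have hbN : ∀ x, b x ∈ N' := fun x => (LinearMap.snd A N N' (σ x)).2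
  obtain ⟨n, hn⟩ := Filter.eventually_atTop.1 (LinearMap.eventually_isCompl_ker_pow_range_pow a)
  have hn := hn (n + 1) (by omega)
  rcases h.2 _ _ hn with h0 | h0
  · left
    have : LinearMap.range (a ^ (n+1)) = ⊤ := by
      have := hn.sup_eq_top
      rwa [h0, bot_sup_eq] at this
    rw [eq_top_iff, ← this]
    rintro _ ⟨x, rfl⟩
    rw [pow_succ']
    exact haN _
  · right
    have hnil : a ^ (n+1) = 0 := LinearMap.range_eq_bot.1 h0
    have hu : IsUnit b := by
      have : b = 1 - a := by rw [← hab]; abel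
      rw [this]
      exact IsNilpotent.isUnit_one_sub ⟨_, hnil⟩
    have hbs := ((Module.End.isUnit_iff b).1 hu).2
    rw [eq_top_iff]
    intro y _
    obtain ⟨x, rfl⟩ := hbs y
    exact hbN x

theorem indec_of_equiv {A M M' : Type} [Ring A] [AddCommGroup M] [Module A M]
    [AddCommGroup M'] [Module A M'] (e : M ≃ₗ[A] M') (h : IsIndecomposableMod A M) :
    IsIndecomposableMod A M' := by
  refine ⟨?_, fun N N' hc => ?_⟩
  · have := h.1
    exact e.symm.toEquiv.nontrivial
  · have := h.2 _ _ ((Submodule.orderIsoMapComap e.symm).isCompl hc)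
    simpa using this

theorem radSub_equiv_s6 {A M M' : Type} [Ring A] [AddCommGroup M] [Module A M]
    [AddCommGroup M'] [Module A M'] {N : Submodule A M} {N' : Submodule A M'}
    (e : N ≃ₗ[A] N') : Nonempty (radSub N ≃ₗ[A] radSub N') := by
  have key : (sInf {P : Submodule A N | IsCoatom P}).map (e : N →ₗ[A] N') =
      sInf {P : Submodule A N' | IsCoatom P} := by
    have h1 : (sInf {P : Submodule A N | IsCoatom P}).map (e : N →ₗ[A] N') =
      Submodule.orderIsoMapComap e (sInf {P : Submodule A N | IsCoatom P}) := rfl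
    rw [h1, OrderIso.map_sInf_eq_sInf_symm_preimage]
    congr 1
    ext P
    exact (Submodule.orderIsoMapComap e).symm.isCoatom_iff P
  have e1 := Submodule.equivMapOfInjective N.subtype N.injective_subtype
    (sInf {P : Submodule A N | IsCoatom P})
  have e2 := Submodule.equivMapOfInjective N'.subtype N'.injective_subtype
    (sInf {P : Submodule A N' | IsCoatom P})
  exact ⟨e1.symm.trans ((e.submoduleMap _).trans ((LinearEquiv.ofEq _ _ key).trans e2))⟩

theorem le_radSub {A M : Type} [Ring A] [AddCommGroup M] [Module A M]
    [IsNoetherian A M] [IsArtinian A M] (N : Submodule A M) [Module.Projective A N]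
    (h : IsIndecomposableMod A N) (Q : Submodule A M) (hQ : Q ≤ N) :
    Q = N ∨ Q ≤ radSub N := by
  by_cases hq : Q.submoduleOf N = ⊤
  · left
    exact le_antisymm hQ (Submodule.submoduleOf_eq_top.1 hq)
  · right
    have : Q.submoduleOf N ≤ sInf {P : Submodule A N | IsCoatom P} := by
      refine le_sInf fun C hC => ?_
      by_contra hle
      have : Q.submoduleOf N ⊔ C = ⊤ := hC.2 _ (by simpa using hle)
      rcases proper_of_indec h _ _ this with h1 | h1
      · exact hq h1
      · exact hC.1 h1
    intro x hx
    exact ⟨⟨x, hQ hx⟩, this hx, rfl⟩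

theorem P_equiv (H : HaradaData R) (i : Fin H.m) (k : ℕ) (hk : k < H.n i) :
    Nonempty (rightIdeal R (H.e i ⟨k, hk⟩) ≃ₗ[Rᵐᵒᵖ] H.P i ⟨k, hk⟩) := by
  induction k with
  | zero => exact ⟨LinearEquiv.refl _ _⟩
  | succ k ih =>
    obtain ⟨e⟩ := ih (by omega)
    obtain ⟨e1⟩ := H.rad_iso i ⟨k+1, hk⟩ (by simp)
    obtain ⟨e2⟩ := radSub_equiv_s6 e
    refine ⟨e1.trans (e2.trans (LinearEquiv.ofEq _ _ ?_))⟩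
    simp only [HaradaData.P, Function.iterate_succ_apply']

theorem proj_rightIdeal (x : R) (hx : IsIdempotentElem x) :
    Module.Projective Rᵐᵒᵖ (rightIdeal R x) := by
  have hp : Module.Projective Rᵐᵒᵖ R :=
    Module.Projective.of_equiv (MulOpposite.opLinearEquiv Rᵐᵒᵖ (M := R)).symm
  let p : R →ₗ[Rᵐᵒᵖ] rightIdeal R x :=
    { toFun := fun y => ⟨x * y, Submodule.mem_span_singleton.2 ⟨op y, rfl⟩⟩
      map_add' := fun a b => by ext; simp [mul_add]
      map_smul' := fun a b => by ext; simp [mul_assoc] }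
  refine Module.Projective.of_split (rightIdeal R x).subtype p ?_
  ext ⟨y, hy⟩
  obtain ⟨r, rfl⟩ := Submodule.mem_span_singleton.1 hy
  simp [p, ← mul_assoc, hx.eq]

theorem P_proj (H : HaradaData R) (i : Fin H.m) (k : Fin (H.n i)) :
    Module.Projective Rᵐᵒᵖ (H.P i k) := by
  obtain ⟨e⟩ := P_equiv H i k.1 k.2
  have := proj_rightIdeal _ (H.idem i k)
  exact Module.Projective.of_equiv e

theorem P_indec (H : HaradaData R) (i : Fin H.m) (k : Fin (H.n i)) :
    IsIndecomposableMod Rᵐᵒᵖ (H.P i k) := by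
  obtain ⟨e⟩ := P_equiv H i k.1 k.2
  exact indec_of_equiv e (H.indec i k)

theorem P_chain [IsNoetherian Rᵐᵒᵖ R] [IsArtinian Rᵐᵒᵖ R] (H : HaradaData R) (s : Fin H.m)
    (Q : Submodule Rᵐᵒᵖ R) (hQ : Q ≤ H.P s ⟨0, H.hn s⟩) (t : ℕ) (ht : t < H.n s) :
    Q ≤ H.P s ⟨t, ht⟩ ∨ ∃ k, Q = H.P s k := by
  induction t with
  | zero => exact Or.inl hQ
  | succ t ih =>
    rcases ih (by omega) with h | h
    · have := P_proj H s ⟨t, by omega⟩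
      rcases le_radSub _ (P_indec H s ⟨t, Nat.lt_of_succ_lt ht⟩) Q h with h1 | h1
      · exact Or.inr ⟨_, h1⟩
      · left
        simpa only [HaradaData.P, Function.iterate_succ_apply'] using h1
    · exact Or.inr h

theorem P_le (H : HaradaData R) (s : Fin H.m) (t : ℕ) (ht : t < H.n s) :
    H.P s ⟨t, ht⟩ ≤ H.P s ⟨0, H.hn s⟩ := by
  induction t with
  | zero => exact le_rfl
  | succ t ih =>
    refine le_trans ?_ (ih (by omega))
    simp only [HaradaData.P, Function.iterate_succ_apply']
    exact radSub_le _

/-- Lemma 2.3(2).  Let `f : P_{ij} → P_{il}` be injective, `j ≥ l`.  Every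
non-injective `g : P_{ij} → P_{st}` factors as `g = h ∘ f`. -/
theorem statement6 (K R : Type) [Field K] [IsAlgClosed K] [Ring R] [Algebra K R]
    [FiniteDimensional K R] (H : HaradaData R) (i : Fin H.m) (j l : Fin (H.n i))
    (f : ↥(H.P i j) →ₗ[Rᵐᵒᵖ] ↥(H.P i l)) (hf : Function.Injective f) (hjl : l ≤ j)
    (s : Fin H.m) (t : Fin (H.n s))
    (g : ↥(H.P i j) →ₗ[Rᵐᵒᵖ] ↥(H.P s t)) (hg : ¬ Function.Injective g) :
    ∃ h : ↥(H.P i l) →ₗ[Rᵐᵒᵖ] ↥(H.P s t), g = h.comp f := by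
  have : IsNoetherian Rᵐᵒᵖ R := isNoetherian_of_tower K inferInstance
  have : IsArtinian Rᵐᵒᵖ R := isArtinian_of_tower K inferInstance
  have hinj : Module.Injective Rᵐᵒᵖ (H.P s ⟨0, H.hn s⟩) := H.inj s
  obtain ⟨h', hh'⟩ := hinj.out f hf ((Submodule.inclusion (P_le H s t.1 t.2)).comp g)
  let h2 : H.P i l →ₗ[Rᵐᵒᵖ] R := (H.P s ⟨0, H.hn s⟩).subtype.comp h'
  have h2f : ∀ x, h2 (f x) = g x := fun x => by simp [h2, hh']
  rcases P_chain H s (LinearMap.range h2)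
    (by rintro _ ⟨x, rfl⟩; exact (h' x).2) t.1 t.2 with h | ⟨k, hk⟩
  · refine ⟨h2.codRestrict _ fun x => h ⟨x, rfl⟩, ?_⟩
    ext x
    exact (h2f x).symm
  · exfalso
    apply hg
    have hp : Module.Projective Rᵐᵒᵖ (LinearMap.range h2) := by
      rw [hk]; exact P_proj H s k
    obtain ⟨σ, hσ⟩ := Module.projective_lifting_property h2.rangeRestrict LinearMap.id
      h2.surjective_rangeRestrict
    have hc := LinearMap.isCompl_of_proj (p := LinearMap.range σ)
      (f := (σ.comp h2.rangeRestrict).codRestrict _ fun x => ⟨_, rfl⟩) (by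
        rintro ⟨_, y, rfl⟩
        apply Subtype.ext
        have := LinearMap.congr_fun hσ y
        simp only [LinearMap.comp_apply, LinearMap.id_apply] at this
        exact congrArg σ this)
    have hker : LinearMap.ker h2 = ⊥ := by
      rcases (P_indec H i l).2 _ _ hc with h0 | h0
      · exfalso
        have hσ0 : σ = 0 := LinearMap.range_eq_bot.1 h0
        have hn := (P_indec H s k).1
        obtain ⟨⟨y, hy⟩, hy0⟩ := exists_ne (0 : H.P s k)
        rw [← hk] at hy
        have := LinearMap.congr_fun hσ ⟨y, hy⟩
        rw [hσ0] at this
        apply hy0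
        have := congrArg Subtype.val this
        ext
        simpa using this.symm
      · rw [eq_bot_iff, ← h0]
        intro x hx
        have hx0 : h2.rangeRestrict x = 0 := by
          ext
          simpa using hx
        rw [LinearMap.mem_ker]
        apply Subtype.ext
        change σ (h2.rangeRestrict x) = 0
        rw [hx0, map_zero]
    intro x y hxy
    apply hf
    apply LinearMap.ker_eq_bot.1 hker
    rw [h2f, h2f, hxy]
end

section
/- Let R be a basic left Harada algebra as below, let Q_1,…,Q_k and Q'_1,…,Q'_l be indecomposable projective right R-modules, and let f : Q_1 ⊕ ⋯ ⊕ Q_k → Q'_1 ⊕ ⋯ ⊕ Q'_l be an injective homomorphism. Then k ≤ l and there exist automorphisms φ of Q_1 ⊕ ⋯ ⊕ Q_k and ψ of Q'_1 ⊕ ⋯ ⊕ Q'_l and an injection σ : {1,…,k} → {1,…,l} such that, writing ψ ∘ f ∘ φ^{-1} in matrix form with respect to the direct sum decompositions, its (b,a)-component Q_a → Q'_b is zero whenever b ≠ σ(a) (i.e., after reindexing the summands of the target, ψ f φ^{-1} is a diagonal matrix of monomorphisms f_a : Q_a → Q'_{σ(a)} together with zero rows). -/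
/-!
Common setup.  `K` is an algebraically closed field and `R` a finite-dimensional associative
unital `K`-algebra.  Right `R`-modules are formalized as modules over the opposite ring `Rᵐᵒᵖ`
(so that `MulOpposite.op r • x = x * r`).
-/

open MulOpposite

variable {R : Type} [Ring R]

namespace HaradaDiag

/-- A retract of an indecomposable module is everything (or zero). -/
theorem retract_inj {A M N : Type} [Ring A] [AddCommGroup M] [Module A M] [AddCommGroup N]
    [Module A N] [Nontrivial N] (hM : IsIndecomposableMod A M) (r : M →ₗ[A] N) (t : N →ₗ[A] M)
    (h : ∀ x, r (t x) = x) : Function.Injective r := by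
  have hc : IsCompl (LinearMap.ker r) (LinearMap.range t) := by
    constructor
    · rw [Submodule.disjoint_def]
      rintro x hx ⟨y, rfl⟩
      have : r (t y) = 0 := hx
      rw [h] at this
      simp [this]
    · rw [codisjoint_iff, eq_top_iff]
      intro x _
      rw [Submodule.mem_sup]
      refine ⟨x - t (r x), ?_, t (r x), ⟨_, rfl⟩, by simp⟩
      simp [LinearMap.mem_ker, h]
  rcases hM.2 _ _ hc with h1 | h1
  · exact LinearMap.ker_eq_bot.mp h1
  · exfalso
    obtain ⟨y, hy⟩ := exists_ne (0 : N)
    apply hy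
    have : t y = 0 := by
      have : t y ∈ LinearMap.range t := ⟨y, rfl⟩
      rw [h1] at this
      simpa using this
    rw [← h y, this, map_zero]

theorem surj_proj_inj {A M N : Type} [Ring A] [AddCommGroup M] [Module A M] [AddCommGroup N]
    [Module A N] [Nontrivial N] [Module.Projective A N] (hM : IsIndecomposableMod A M)
    (r : M →ₗ[A] N) (hr : Function.Surjective r) : Function.Injective r := by
  obtain ⟨s, hs⟩ := Module.projective_lifting_property r LinearMap.id hr
  exact retract_inj hM r s (fun x => by simpa using LinearMap.congr_fun hs x)

/-- Fitting's lemma. -/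
theorem fitting {A M : Type} [Ring A] [IsArtinianRing A] [AddCommGroup M] [Module A M]
    [Module.Finite A M] (hM : IsIndecomposableMod A M) (g : Module.End A M) :
    Function.Bijective g ∨ ∃ n : ℕ, g ^ n = 0 := by
  obtain ⟨n, hn⟩ := Filter.eventually_atTop.mp g.eventually_isCompl_ker_pow_range_pow
  have h1 := hn (n + 1) (Nat.le_succ n)
  rcases hM.2 _ _ h1 with h2 | h2
  · left
    have hi : Function.Injective g := by
      have h3 : Function.Injective (g ^ (n + 1)) := LinearMap.ker_eq_bot.mp h2
      rw [pow_succ] at h3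
      exact Function.Injective.of_comp (f := (g ^ n)) h3
    exact ⟨hi, IsArtinian.surjective_of_injective_endomorphism g hi⟩
  · right
    exact ⟨n + 1, LinearMap.range_eq_bot.mp h2⟩

/-- An endomorphism compatible with a nonzero map is bijective. -/
theorem bij_of_comp {A M S : Type} [Ring A] [IsArtinianRing A] [AddCommGroup M] [Module A M]
    [Module.Finite A M] [AddCommGroup S] [Module A S] (hM : IsIndecomposableMod A M)
    (g : Module.End A M) (p : M →ₗ[A] S) (hp : p ≠ 0) (h : ∀ x, p (g x) = p x) :
    Function.Bijective g := by
  rcases fitting hM g with h1 | ⟨n, h1⟩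
  · exact h1
  · exfalso
    apply hp
    have : ∀ n : ℕ, ∀ x, p ((g ^ n) x) = p x := by
      intro n
      induction n with
      | zero => intro x; simp
      | succ k ih => intro x; rw [pow_succ]; simp [ih, h]
    ext x
    rw [← this n, h1]
    simp

/-- Indecomposable finitely generated projectives are local. -/
theorem local_proj {A M : Type} [Ring A] [IsArtinianRing A] [AddCommGroup M] [Module A M]
    [Module.Finite A M] [Module.Projective A M] (hM : IsIndecomposableMod A M)
    (N : Submodule A M) : N = ⊤ ∨ N ≤ sInf {P : Submodule A M | IsCoatom P} := by
  by_cases hN : N = ⊤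
  · exact Or.inl hN
  right
  apply le_sInf
  intro P hP
  by_contra hle
  apply hN
  have hsup : N ⊔ P = ⊤ := hP.2 _ (lt_of_le_of_ne le_sup_right (by
    intro h; apply hle; rw [h]; exact le_sup_left))
  have hs : Function.Surjective (P.mkQ.comp N.subtype) := by
    intro y
    obtain ⟨x, rfl⟩ := P.mkQ_surjective y
    have hx : x ∈ N ⊔ P := by rw [hsup]; trivial
    obtain ⟨a, ha, b, hb, rfl⟩ := Submodule.mem_sup.mp hx
    refine ⟨⟨a, ha⟩, ?_⟩
    simp [(Submodule.Quotient.mk_eq_zero P).mpr hb]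
  obtain ⟨s, hs⟩ := Module.projective_lifting_property _ P.mkQ hs
  have hb := bij_of_comp hM (N.subtype.comp s) P.mkQ (by
    intro h
    apply hP.1
    rw [← P.ker_mkQ, h, LinearMap.ker_zero]) (fun x => LinearMap.congr_fun hs x)
  rw [eq_top_iff]
  intro x _
  obtain ⟨y, rfl⟩ := hb.2 x
  exact (s y).2

/-- Uniform modules. -/
def Uniform (A M : Type) [Ring A] [AddCommGroup M] [Module A M] : Prop :=
  ∀ N N' : Submodule A M, N ⊓ N' = ⊥ → N = ⊥ ∨ N' = ⊥

theorem uniform_of_inj {A M : Type} [Ring A] [IsArtinianRing A] [AddCommGroup M] [Module A M]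
    [Module.Finite A M] [Module.Injective A M] (hM : IsIndecomposableMod A M) :
    Uniform A M := by
  intro N N' h
  have hi : Function.Injective (N.subtype.coprod N'.subtype) := by
    rw [← LinearMap.ker_eq_bot, LinearMap.ker_eq_bot']
    rintro ⟨x, y⟩ hxy
    have hxy : (x : M) + y = 0 := by simpa using hxy
    have hx : (x : M) ∈ N ⊓ N' := ⟨x.2, by
      rw [eq_neg_of_add_eq_zero_left hxy]; exact N'.neg_mem y.2⟩
    rw [h, Submodule.mem_bot] at hx
    rw [hx, zero_add] at hxy
    ext
    · exact hx
    · exact hxy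
  obtain ⟨g, hg⟩ := Module.Injective.out _ hi (N.subtype.comp (LinearMap.fst A N N'))
  have hg1 : ∀ x ∈ N, g x = x := fun x hx => by simpa using hg (⟨x, hx⟩, 0)
  have hg2 : ∀ x ∈ N', g x = 0 := fun x hx => by simpa using hg (0, ⟨x, hx⟩)
  rcases fitting hM g with h1 | ⟨n, h1⟩
  · right
    rw [eq_bot_iff]
    intro x hx
    apply h1.1
    rw [hg2 x hx, map_zero]
  · left
    rw [eq_bot_iff]
    intro x hx
    have : ∀ n : ℕ, (g ^ n) x = x := by
      intro n
      induction n with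
      | zero => simp
      | succ k ih => rw [pow_succ]; simp [hg1 x hx, ih]
    rw [← this n, h1]
    simp

theorem Uniform.of_injective {A M N : Type} [Ring A] [AddCommGroup M] [Module A M]
    [AddCommGroup N] [Module A N] (h : Uniform A N) (t : M →ₗ[A] N) (ht : Function.Injective t) :
    Uniform A M := by
  intro X Y hXY
  have := h (X.map t) (Y.map t) (by rw [← Submodule.map_inf t ht, hXY, Submodule.map_bot])
  have key : ∀ Z : Submodule A M, Z.map t = ⊥ → Z = ⊥ := fun Z hZ =>
    Submodule.map_injective_of_injective ht (by rw [hZ, Submodule.map_bot])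
  exact this.imp (key X) (key Y)

theorem Uniform.inj_of_comp {A M N L : Type} [Ring A] [AddCommGroup M] [Module A M]
    [AddCommGroup N] [Module A N] [AddCommGroup L] [Module A L] [Nontrivial M]
    (h : Uniform A N) (u : M →ₗ[A] N) (g : N →ₗ[A] L)
    (hi : Function.Injective (g ∘ u)) : Function.Injective g := by
  have h0 : LinearMap.ker g ⊓ LinearMap.range u = ⊥ := by
    rw [eq_bot_iff]
    rintro x ⟨hx, ⟨y, rfl⟩⟩
    have : y = 0 := hi (by simpa using hx)
    simp [this]
  rcases h _ _ h0 with h1 | h1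
  · exact LinearMap.ker_eq_bot.mp h1
  · exfalso
    have hu := LinearMap.range_eq_bot.mp h1
    obtain ⟨y, hy⟩ := exists_ne (0 : M)
    exact hy (hi (by simp [hu]))

theorem Uniform.exists_inj {A M ι : Type} [Ring A] [AddCommGroup M] [Module A M] [Nontrivial M]
    (h : Uniform A M) (s : Finset ι) (N : ι → Submodule A M) (hN : s.inf N = ⊥) :
    ∃ b ∈ s, N b = ⊥ := by
  classical
  induction s using Finset.induction_on with
  | empty => simp at hN
  | insert b s _ ih =>
    rw [Finset.inf_insert] at hN
    rcases h _ _ hN with h1 | h1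
    · exact ⟨b, by simp, h1⟩
    · obtain ⟨c, hc, hc'⟩ := ih h1
      exact ⟨c, by simp [hc], hc'⟩

/-- The embedding property. -/
def Good {A Q E : Type} [Ring A] [AddCommGroup Q] [Module A Q] [AddCommGroup E] [Module A E]
    (i : Q →ₗ[A] E) : Prop :=
  Function.Injective i ∧ ∀ N : Submodule A E,
    N ≤ LinearMap.range i ∨ (LinearMap.range i ≤ N ∧ Module.Projective A N)

/-- Modules with a good embedding in an indecomposable injective. -/
structure Nice (A Q : Type) [Ring A] [AddCommGroup Q] [Module A Q] : Prop where
  fin : Module.Finite A Q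
  indec : IsIndecomposableMod A Q
  emb : ∃ (E : ModuleCat.{0} A) (i : Q →ₗ[A] E), Module.Finite A E ∧ Module.Injective A E ∧
    IsIndecomposableMod A E ∧ Good i

theorem Nice.uniform {A Q : Type} [Ring A] [IsArtinianRing A] [AddCommGroup Q] [Module A Q]
    (h : Nice A Q) : Uniform A Q := by
  obtain ⟨E, i, h1, h2, h3, h4⟩ := h.emb
  exact (uniform_of_inj h3).of_injective i h4.1

theorem factor {A P Q M : Type} [Ring A] [AddCommGroup P] [Module A P]
    [AddCommGroup Q] [Module A Q] [AddCommGroup M] [Module A M] (u : Q →ₗ[A] M) (g : P →ₗ[A] M)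
    (hu : Function.Injective u) (h : LinearMap.range g ≤ LinearMap.range u) :
    ∃ k : P →ₗ[A] Q, g = u.comp k := by
  let e := LinearEquiv.ofInjective u hu
  refine ⟨e.symm.toLinearMap.comp (g.codRestrict _ (fun x => h ⟨x, rfl⟩)), ?_⟩
  ext x
  have : (e (e.symm (g.codRestrict _ (fun x => h ⟨x, rfl⟩) x)) : M) = g x := by simp
  rw [← this]
  rfl

theorem Good.range_cases {A P Q E : Type} [Ring A] [AddCommGroup P] [Module A P]
    [AddCommGroup Q] [Module A Q] [AddCommGroup E] [Module A E] [Nontrivial Q]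
    {i : Q →ₗ[A] E} (hi : Good i) (hP : IsIndecomposableMod A P) (g : P →ₗ[A] E) :
    (LinearMap.range g ≤ LinearMap.range i) ∨
      (Function.Injective g ∧ LinearMap.range i ≤ LinearMap.range g) := by
  rcases hi.2 (LinearMap.range g) with h | ⟨h, hp⟩
  · exact Or.inl h
  · right
    refine ⟨?_, h⟩
    obtain ⟨y, hy⟩ := exists_ne (0 : Q)
    have : Nontrivial (LinearMap.range g) := by
      refine ⟨⟨⟨i y, h ⟨y, rfl⟩⟩, 0, ?_⟩⟩
      intro h0
      apply hy
      apply hi.1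
      simpa using congrArg Subtype.val h0
    have := surj_proj_inj hP g.rangeRestrict g.surjective_rangeRestrict
    intro a b hab
    exact this (Subtype.ext hab)

/-- Column elimination. -/
theorem Nice.col {A Q Q' Q'' : Type} [Ring A] [AddCommGroup Q] [Module A Q]
    [AddCommGroup Q'] [Module A Q'] [AddCommGroup Q''] [Module A Q'']
    (hQ' : Nice A Q') (hQ'' : Nice A Q'') (u : Q →ₗ[A] Q') (hu : Function.Injective u)
    (g : Q →ₗ[A] Q'') :
    (∃ h : Q' →ₗ[A] Q'', g = h.comp u) ∨
      (Function.Injective g ∧ ∃ h : Q'' →ₗ[A] Q', u = h.comp g) := by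
  obtain ⟨E, i, h1, h2, h3, h4⟩ := hQ''.emb
  have := hQ''.indec.1
  obtain ⟨h, hh⟩ := Module.Injective.out u hu (i.comp g)
  rcases h4.range_cases hQ'.indec h with h5 | ⟨h5, h6⟩
  · left
    obtain ⟨k, hk⟩ := factor i h h4.1 h5
    refine ⟨k, ?_⟩
    ext x
    apply h4.1
    have := hh x
    rw [hk] at this
    exact this.symm
  · right
    constructor
    · intro a b hab
      apply hu
      apply h5
      rw [hh, hh]
      simp [hab]
    · obtain ⟨k, hk⟩ := factor h i h5 h6
      refine ⟨k, ?_⟩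
      ext x
      apply h5
      rw [hh x, hk]
      rfl

/-- Row elimination. -/
theorem Nice.row {A P Q Q' : Type} [Ring A] [IsArtinianRing A] [AddCommGroup P] [Module A P]
    [AddCommGroup Q] [Module A Q] [AddCommGroup Q'] [Module A Q']
    (hP : Nice A P) (hQ : Nice A Q) (hQ' : Nice A Q') (u : Q →ₗ[A] Q')
    (hu : Function.Injective u) (g : P →ₗ[A] Q') :
    (∃ h : P →ₗ[A] Q, g = u.comp h) ∨
      (Function.Injective g ∧ ∃ h : Q →ₗ[A] P, u = g.comp h) := by
  obtain ⟨E, i, e1, e2, e3, e4⟩ := hQ.emb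
  obtain ⟨E', i', f1, f2, f3, f4⟩ := hQ'.emb
  have := hQ.indec.1
  have := e3.1
  obtain ⟨t, ht⟩ := Module.Injective.out i e4.1 (i'.comp u)
  have htinj : Function.Injective t := by
    apply (uniform_of_inj e3).inj_of_comp i t
    intro a b hab
    apply hu
    apply f4.1
    simpa [ht] using hab
  obtain ⟨r, hr⟩ := Module.Injective.out t htinj LinearMap.id
  have hrinj := retract_inj f3 r t hr
  have hgood : Good (i'.comp u) := by
    refine ⟨f4.1.comp hu, ?_⟩
    intro N
    have hrange : LinearMap.range (i'.comp u) = (LinearMap.range i).map t := by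
      rw [← LinearMap.range_comp]
      congr 1
      ext x
      exact (ht x).symm
    have hsurj : Function.Surjective t := fun y => ⟨r y, hrinj (by simp [hr])⟩
    have hN : (N.comap t).map t = N := Submodule.map_comap_eq_of_surjective hsurj N
    rw [hrange]
    rcases e4.2 (N.comap t) with h | ⟨h, hp⟩
    · left
      rw [← hN]
      exact Submodule.map_mono h
    · right
      refine ⟨Submodule.map_le_iff_le_comap.mpr h, ?_⟩
      rw [← hN]
      exact Module.Projective.of_equiv' (Submodule.equivMapOfInjective t htinj _)
  have key : ∀ {X Y : Type} [AddCommGroup X] [Module A X] [AddCommGroup Y] [Module A Y]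
      (v : X →ₗ[A] Q') (w : Y →ₗ[A] Q'),
      LinearMap.range (i'.comp v) ≤ LinearMap.range (i'.comp w) →
      LinearMap.range v ≤ LinearMap.range w := by
    intro X Y _ _ _ _ v w h
    rw [LinearMap.range_comp, LinearMap.range_comp] at h
    exact (Submodule.map_le_map_iff_of_injective f4.1 _ _).mp h
  rcases hgood.range_cases hP.indec (i'.comp g) with h5 | ⟨h5, h6⟩
  · left
    exact factor u g hu (key _ _ h5)
  · right
    have hg : Function.Injective g := Function.Injective.of_comp (f := i') h5
    exact ⟨hg, factor g u hg (key _ _ h6)⟩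

end HaradaDiag

namespace HaradaDiag

theorem good_step {A P P' E : Type} [Ring A] [IsArtinianRing A] [AddCommGroup P] [Module A P]
    [Module.Finite A P] [Module.Projective A P] [AddCommGroup P'] [Module A P']
    [AddCommGroup E] [Module A E] (hP : IsIndecomposableMod A P)
    (i : P →ₗ[A] E) (hi : Good i)
    (e : P' ≃ₗ[A] ↥(sInf {X : Submodule A P | IsCoatom X})) :
    ∃ i' : P' →ₗ[A] E, Good i' := by
  refine ⟨i.comp ((Submodule.subtype _).comp e.toLinearMap), ?_, ?_⟩
  · intro a b hab
    apply e.injective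
    apply Subtype.ext
    exact hi.1 hab
  · have hr : LinearMap.range (i.comp ((Submodule.subtype _).comp e.toLinearMap)) =
        (sInf {X : Submodule A P | IsCoatom X}).map i := by
      rw [LinearMap.range_comp, LinearMap.range_comp]
      simp
    rw [hr]
    have hle : (sInf {X : Submodule A P | IsCoatom X}).map i ≤ LinearMap.range i :=
      LinearMap.map_le_range
    intro N
    rcases hi.2 N with h | ⟨h, hp⟩
    · have hN : (N.comap i).map i = N := by
        rw [Submodule.map_comap_eq]
        exact inf_eq_right.mpr h
      rcases local_proj hP (N.comap i) with h1 | h1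
      · right
        have h2 : N = LinearMap.range i := by
          rw [← hN, h1, Submodule.map_top]
        refine ⟨h2 ▸ hle, ?_⟩
        rw [h2]
        exact Module.Projective.of_equiv' (LinearEquiv.ofInjective i hi.1)
      · left
        rw [← hN]
        exact Submodule.map_mono h1
    · right
      exact ⟨hle.trans h, hp⟩

/-- `R` as a right module is free of rank one. -/
def opEquiv (R : Type) [Ring R] : Rᵐᵒᵖ ≃ₗ[Rᵐᵒᵖ] R where
  toFun := unop
  invFun := op
  left_inv _ := rfl
  right_inv _ := rfl
  map_add' _ _ := rfl
  map_smul' _ _ := rfl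

theorem mem_rightIdeal {R : Type} [Ring R] (e x : R) : x ∈ rightIdeal R e ↔ ∃ r, e * r = x := by
  unfold rightIdeal
  rw [Submodule.mem_span_singleton]
  constructor
  · rintro ⟨a, rfl⟩
    exact ⟨unop a, rfl⟩
  · rintro ⟨r, rfl⟩
    exact ⟨op r, rfl⟩

/-- Left multiplication as a right-linear map onto the right ideal. -/
def lmul {R : Type} [Ring R] (e : R) : R →ₗ[Rᵐᵒᵖ] ↥(rightIdeal R e) where
  toFun x := ⟨e * x, (mem_rightIdeal e _).mpr ⟨x, rfl⟩⟩
  map_add' x y := Subtype.ext (mul_add e x y)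
  map_smul' a x := Subtype.ext (mul_assoc e x (unop a)).symm

theorem proj_rightIdeal {R : Type} [Ring R] (e : R) (he : IsIdempotentElem e) :
    Module.Projective Rᵐᵒᵖ ↥(rightIdeal R e) := by
  have : Module.Projective Rᵐᵒᵖ R := Module.Projective.of_equiv' (opEquiv R)
  refine Module.Projective.of_split (rightIdeal R e).subtype (lmul e) ?_
  apply LinearMap.ext
  rintro ⟨x, hx⟩
  apply Subtype.ext
  obtain ⟨r, rfl⟩ := (mem_rightIdeal e x).mp hx
  show e * (e * r) = e * r
  rw [← mul_assoc, he.eq]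

theorem fin_rightIdeal {R : Type} [Ring R] (e : R) : Module.Finite Rᵐᵒᵖ ↥(rightIdeal R e) := by
  unfold rightIdeal
  infer_instance

theorem good_e {R : Type} [Ring R] [IsArtinianRing Rᵐᵒᵖ] (H : HaradaData R) (i : Fin H.m) (j : ℕ)
    (hj : j < H.n i) :
    ∃ t : ↥(rightIdeal R (H.e i ⟨j, hj⟩)) →ₗ[Rᵐᵒᵖ] ↥(rightIdeal R (H.e i ⟨0, H.hn i⟩)),
      Good t := by
  induction j with
  | zero =>
    refine ⟨LinearMap.id, Function.injective_id, fun N => Or.inl ?_⟩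
    simp
  | succ j ih =>
    obtain ⟨t, ht⟩ := ih (Nat.lt_of_succ_lt hj)
    have := proj_rightIdeal _ (H.idem i ⟨j, Nat.lt_of_succ_lt hj⟩)
    have := fin_rightIdeal (H.e i ⟨j, Nat.lt_of_succ_lt hj⟩)
    obtain ⟨e⟩ := H.rad_iso i ⟨j + 1, hj⟩ (Nat.succ_pos j)
    exact good_step (H.indec i ⟨j, Nat.lt_of_succ_lt hj⟩) t ht (e.trans
      (Submodule.equivMapOfInjective
        (rightIdeal R (H.e i ⟨j, Nat.lt_of_succ_lt hj⟩)).subtype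
        (Submodule.injective_subtype (rightIdeal R (H.e i ⟨j, Nat.lt_of_succ_lt hj⟩)))
        (sInf {P | IsCoatom P})).symm)

theorem iso_e {R : Type} [Ring R] [IsArtinianRing Rᵐᵒᵖ] (H : HaradaData R) (Q : Type)
    [AddCommGroup Q] [Module Rᵐᵒᵖ Q] [Module.Finite Rᵐᵒᵖ Q] [Module.Projective Rᵐᵒᵖ Q]
    (hQ : IsIndecomposableMod Rᵐᵒᵖ Q) :
    ∃ i j, ∃ t : Q →ₗ[Rᵐᵒᵖ] ↥(rightIdeal R (H.e i j)), Function.Bijective t := by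
  have := hQ.1
  obtain ⟨N, hN⟩ := IsCoatomic.exists_coatom (α := Submodule Rᵐᵒᵖ Q)
  have hs : IsSimpleModule Rᵐᵒᵖ (Q ⧸ N) := isSimpleModule_iff_isCoatom.mpr hN
  have hmk : N.mkQ ≠ 0 := by
    intro h
    apply hN.1
    rw [← N.ker_mkQ, h, LinearMap.ker_zero]
  obtain ⟨s, hs0⟩ : ∃ s : Q ⧸ N, s ≠ 0 := by
    by_contra! hcon
    exact hmk (LinearMap.ext fun x => hcon _)
  let g : R →ₗ[Rᵐᵒᵖ] Q ⧸ N := (LinearMap.toSpanSingleton Rᵐᵒᵖ _ s).comp (opEquiv R).symm.toLinearMap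
  have hg : g 1 = s := one_smul Rᵐᵒᵖ s
  obtain ⟨p, hp⟩ : ∃ p : Σ i : Fin H.m, Fin (H.n i), g (H.e p.1 p.2) ≠ 0 := by
    by_contra! hcon
    apply hs0
    rw [← hg, ← H.sum_eq_one, map_sum]
    exact Finset.sum_eq_zero (fun p _ => hcon p)
  obtain ⟨i, j⟩ := p
  refine ⟨i, j, ?_⟩
  have := proj_rightIdeal _ (H.idem i j)
  have := fin_rightIdeal (H.e i j)
  let q := g.comp (rightIdeal R (H.e i j)).subtype
  have hq : q ≠ 0 := by
    intro h
    apply hp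
    exact LinearMap.congr_fun h ⟨H.e i j, (mem_rightIdeal _ _).mpr ⟨1, mul_one _⟩⟩
  have hqs : Function.Surjective q := LinearMap.surjective_of_ne_zero hq
  obtain ⟨u, hu⟩ := Module.projective_lifting_property q N.mkQ hqs
  obtain ⟨v, hv⟩ := Module.projective_lifting_property N.mkQ q N.mkQ_surjective
  have hu' := LinearMap.congr_fun hu
  have hv' := LinearMap.congr_fun hv
  simp only [LinearMap.comp_apply] at hu' hv'
  have h1 := bij_of_comp hQ (v.comp u) N.mkQ hmk (fun x => by
    simp only [LinearMap.comp_apply]; rw [hv', hu'])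
  have h2 := bij_of_comp (H.indec i j) (u.comp v) q hq (fun x => by
    simp only [LinearMap.comp_apply]; rw [hu', hv'])
  exact ⟨u, Function.Injective.of_comp (f := v) h1.1, Function.Surjective.of_comp (g := v) h2.2⟩

theorem nice_of_proj {R : Type} [Ring R] [IsArtinianRing Rᵐᵒᵖ] (H : HaradaData R) (Q : Type)
    [AddCommGroup Q] [Module Rᵐᵒᵖ Q] [Module.Finite Rᵐᵒᵖ Q] [Module.Projective Rᵐᵒᵖ Q]
    (hQ : IsIndecomposableMod Rᵐᵒᵖ Q) : Nice Rᵐᵒᵖ Q := by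
  obtain ⟨i, j, t, ht⟩ := iso_e H Q hQ
  obtain ⟨w, hw⟩ := good_e H i j.1 j.2
  refine ⟨inferInstance, hQ, ModuleCat.of Rᵐᵒᵖ ↥(rightIdeal R (H.e i ⟨0, H.hn i⟩)), w.comp t,
    fin_rightIdeal _, H.inj i, H.indec i _, hw.1.comp ht.1, ?_⟩
  have : LinearMap.range (w.comp t) = LinearMap.range w := by
    rw [LinearMap.range_comp, LinearMap.range_eq_top.mpr ht.2, Submodule.map_top]
  rw [this]
  exact hw.2

end HaradaDiag

namespace HaradaDiag

theorem surj_of_len {A M N : Type} [Ring A] [IsArtinianRing A] [AddCommGroup M] [Module A M]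
    [AddCommGroup N] [Module A N] [Module.Finite A M] [Module.Finite A N] (h : M →ₗ[A] N)
    (hi : Function.Injective h)
    (hl : (Module.length A N).toNat ≤ (Module.length A M).toNat) : Function.Surjective h := by
  rw [← LinearMap.range_eq_top]
  by_contra hne
  have h1 := Submodule.length_lt hne
  rw [← (LinearEquiv.ofInjective h hi).length_eq] at h1
  have h2 : Module.length A M ≠ ⊤ := Module.length_ne_top
  have h3 : Module.length A N ≠ ⊤ := Module.length_ne_top
  rw [← ENat.natCast_toNat h2, ← ENat.natCast_toNat h3, Nat.cast_lt] at h1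
  omega

/-- The automorphism `1 - n` for `n ^ 2 = 0`. -/
def nilEquiv {A M : Type} [Ring A] [AddCommGroup M] [Module A M] (n : M →ₗ[A] M)
    (hn : ∀ x, n (n x) = 0) : M ≃ₗ[A] M :=
  LinearEquiv.ofLinearMap (LinearMap.id - n) (LinearMap.id + n)
    (by ext x; simp [hn]) (by ext x; simp [hn])

theorem nilEquiv_apply {A M : Type} [Ring A] [AddCommGroup M] [Module A M] (n : M →ₗ[A] M)
    (hn : ∀ x, n (n x) = 0) (x : M) : nilEquiv n hn x = x - n x := rfl

theorem elim_step {A ι κ : Type} [Ring A] [Fintype ι] [DecidableEq ι] [DecidableEq κ]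
    {M : ι → Type} {N : κ → Type} [∀ a, AddCommGroup (M a)] [∀ a, Module A (M a)]
    [∀ b, AddCommGroup (N b)] [∀ b, Module A (N b)]
    (g : (∀ a, M a) →ₗ[A] (∀ b, N b)) (a0 : ι) (b0 : κ)
    (hrow : ∀ a, a ≠ a0 → ∃ h : M a →ₗ[A] M a0,
      ∀ x, g (Pi.single a x) b0 = g (Pi.single a0 (h x)) b0)
    (hcol : ∀ b, b ≠ b0 → ∃ k : N b0 →ₗ[A] N b,
      ∀ x, g (Pi.single a0 x) b = k (g (Pi.single a0 x) b0)) :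
    ∃ (α : (∀ a, M a) ≃ₗ[A] (∀ a, M a)) (β : (∀ b, N b) ≃ₗ[A] (∀ b, N b))
      (h : ∀ a, M a →ₗ[A] M a0),
      (∀ a, a ≠ a0 → ∀ x, g (Pi.single a x) b0 = g (Pi.single a0 (h a x)) b0) ∧
      (∀ a, a ≠ a0 → ∀ x b, β (g (α (Pi.single a x))) b =
        g (Pi.single a x) b - g (Pi.single a0 (h a x)) b) ∧
      (∀ x b, b ≠ b0 → β (g (α (Pi.single a0 x))) b = 0) := by
  have hrow' : ∀ a, ∃ h : M a →ₗ[A] M a0,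
      (a ≠ a0 → ∀ x, g (Pi.single a x) b0 = g (Pi.single a0 (h x)) b0) ∧ (a = a0 → h = 0) := by
    intro a
    by_cases ha : a = a0
    · exact ⟨0, fun h => absurd ha h, fun _ => rfl⟩
    · obtain ⟨h, hh⟩ := hrow a ha
      exact ⟨h, fun _ => hh, fun h => absurd h ha⟩
  have hcol' : ∀ b, ∃ k : N b0 →ₗ[A] N b,
      (b ≠ b0 → ∀ x, g (Pi.single a0 x) b = k (g (Pi.single a0 x) b0)) ∧ (b = b0 → k = 0) := by
    intro b
    by_cases hb : b = b0
    · exact ⟨0, fun h => absurd hb h, fun _ => rfl⟩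
    · obtain ⟨h, hh⟩ := hcol b hb
      exact ⟨h, fun _ => hh, fun h => absurd h hb⟩
  choose h hh hh0 using hrow'
  choose k hk hk0 using hcol'
  let s : (∀ a, M a) →ₗ[A] M a0 := ∑ a, (h a).comp (LinearMap.proj a)
  have hs : ∀ a x, s (Pi.single a x) = h a x := by
    intro a x
    simp only [s, LinearMap.sum_apply, LinearMap.comp_apply, LinearMap.proj_apply]
    rw [Finset.sum_eq_single a]
    · simp
    · intro c _ hc
      simp [Pi.single_eq_of_ne hc]
    · simp
  let n : (∀ a, M a) →ₗ[A] (∀ a, M a) := (LinearMap.single A M a0).comp s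
  have hn : ∀ x, n x = Pi.single a0 (s x) := fun x => rfl
  let m : (∀ b, N b) →ₗ[A] (∀ b, N b) := LinearMap.pi (fun b => (k b).comp (LinearMap.proj b0))
  have hm : ∀ y b, m y b = k b (y b0) := fun y b => rfl
  have hnn : ∀ x, n (n x) = 0 := fun x => by
    rw [hn, hn, hs, hh0 a0 rfl]; simp
  have hmm : ∀ y, m (m y) = 0 := fun y => by
    ext b
    rw [hm, hm, hk0 b0 rfl]; simp
  have key : ∀ a x b, nilEquiv m hmm (g (nilEquiv n hnn (Pi.single a x))) b =
      (g (Pi.single a x) b - g (Pi.single a0 (h a x)) b) -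
        k b (g (Pi.single a x) b0 - g (Pi.single a0 (h a x)) b0) := by
    intro a x b
    rw [nilEquiv_apply, nilEquiv_apply, Pi.sub_apply, hm, hn, hs, map_sub, Pi.sub_apply,
      Pi.sub_apply]
  refine ⟨nilEquiv n hnn, nilEquiv m hmm, h, hh, ?_, ?_⟩
  · intro a ha x b
    rw [key, ← hh a ha x]
    simp
  · intro x b hb
    rw [key, hh0 a0 rfl]
    simp [← hk b hb x]

/-- Partial diagonalization. -/
theorem partial_diag {A ι κ : Type} [Ring A] [IsArtinianRing A] [Fintype ι] [DecidableEq ι]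
    [Fintype κ] [DecidableEq κ]
    {M : ι → Type} {N : κ → Type} [∀ a, AddCommGroup (M a)] [∀ a, Module A (M a)]
    [∀ b, AddCommGroup (N b)] [∀ b, Module A (N b)]
    (hM : ∀ a, Nice A (M a)) (hN : ∀ b, Nice A (N b))
    (f : (∀ a, M a) →ₗ[A] (∀ b, N b)) (hf : Function.Injective f) (n : ℕ)
    (hn : n ≤ Fintype.card ι) :
    ∃ (φ : (∀ a, M a) ≃ₗ[A] (∀ a, M a)) (ψ : (∀ b, N b) ≃ₗ[A] (∀ b, N b))
      (S : Finset ι) (σ : ι → κ), S.card = n ∧ Set.InjOn σ S ∧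
      (∀ a ∈ S, ∀ b, b ≠ σ a → ∀ x, ψ (f (φ.symm (Pi.single a x))) b = 0) ∧
      (∀ a, a ∉ S → ∀ c ∈ S, ∀ x, ψ (f (φ.symm (Pi.single a x))) (σ c) = 0) := by
  classical
  -- every column of an injective map has an injective entry
  have piv : ∀ g : (∀ a, M a) →ₗ[A] (∀ b, N b), Function.Injective g → ∀ a, ∃ b,
      Function.Injective (fun x : M a => g (Pi.single a x) b) := by
    intro g hg a
    have := (hM a).indec.1
    let G : ∀ b, M a →ₗ[A] N b := fun b =>
      (LinearMap.proj b).comp (g.comp (LinearMap.single A M a))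
    obtain ⟨b, -, hb⟩ := (hM a).uniform.exists_inj Finset.univ (fun b => LinearMap.ker (G b)) (by
      rw [eq_bot_iff]
      intro x hx
      rw [Submodule.mem_finsetInf] at hx
      have h0 : g (Pi.single a x) = 0 := by
        ext b
        exact hx b (Finset.mem_univ b)
      have h1 : Pi.single a x = 0 := hg (by rw [h0, map_zero])
      simpa using h1)
    exact ⟨b, LinearMap.ker_eq_bot.mp hb⟩
  induction n with
  | zero =>
    choose σ _ using piv f hf
    exact ⟨LinearEquiv.refl A _, LinearEquiv.refl A _, ∅, σ, by simp⟩
  | succ n ih =>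
    obtain ⟨φ, ψ, S, σ, hS, hσ, h1, h2⟩ := ih (Nat.le_of_succ_le hn)
    let g : (∀ a, M a) →ₗ[A] (∀ b, N b) := ψ.toLinearMap.comp (f.comp φ.symm.toLinearMap)
    have hg : Function.Injective g := ψ.injective.comp (hf.comp φ.symm.injective)
    have hgdef : ∀ x, g x = ψ (f (φ.symm x)) := fun x => rfl
    simp only [← hgdef] at h1 h2
    let G : ∀ b a, M a →ₗ[A] N b := fun b a =>
      (LinearMap.proj b).comp (g.comp (LinearMap.single A M a))
    have hG : ∀ b a x, G b a x = g (Pi.single a x) b := fun _ _ _ => rfl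
    obtain ⟨a1, ha1⟩ : ∃ a, a ∉ S := by
      by_contra! hcon
      have : S = Finset.univ := Finset.eq_univ_iff_forall.mpr hcon
      rw [this, Finset.card_univ] at hS
      omega
    obtain ⟨b1, hb1⟩ := piv g hg a1
    let T : Finset (ι × κ) :=
      Finset.univ.filter (fun p => p.1 ∉ S ∧ Function.Injective (G p.2 p.1))
    have hT : T.Nonempty := ⟨(a1, b1), by simpa [T] using ⟨ha1, hb1⟩⟩
    obtain ⟨⟨a0, b0⟩, hmem, hmax⟩ := T.exists_max_image
      (fun p => ((Module.length A (M p.1)).toNat : ℤ) - (Module.length A (N p.2)).toNat) hT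
    have hmem' : a0 ∉ S ∧ Function.Injective (G b0 a0) := by simpa [T] using hmem
    obtain ⟨ha0, hu⟩ := hmem'
    have := (hM a0).indec.1
    have hb0 : ∀ c ∈ S, b0 ≠ σ c := by
      rintro c hc rfl
      obtain ⟨y, hy⟩ := exists_ne (0 : M a0)
      apply hy
      apply hu
      rw [hG, h2 a0 ha0 c hc, map_zero]
    have hfinM : ∀ a, Module.Finite A (M a) := fun a => (hM a).fin
    have hfinN : ∀ b, Module.Finite A (N b) := fun b => (hN b).fin
    obtain ⟨α, β, h, hh1, hh2, hh3⟩ := elim_step g a0 b0 (by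
      intro a ha
      by_cases haS : a ∈ S
      · refine ⟨0, fun x => ?_⟩
        rw [h1 a haS b0 (hb0 a haS)]
        simp
      rcases Nice.row (hM a) (hM a0) (hN b0) (G b0 a0) hu (G b0 a) with ⟨h, hh⟩ | ⟨hi, h, hh⟩
      · exact ⟨h, fun x => LinearMap.congr_fun hh x⟩
      · have hhi : Function.Injective h := by
          rw [hh] at hu
          exact Function.Injective.of_comp (f := G b0 a) hu
        have hm := hmax (a, b0) (by simpa [T] using ⟨haS, hi⟩)
        have hs := surj_of_len h hhi (by simp only at hm; omega)
        let e := LinearEquiv.ofBijective h ⟨hhi, hs⟩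
        refine ⟨e.symm.toLinearMap, fun x => ?_⟩
        have h3 := LinearMap.congr_fun hh (e.symm x)
        have h4 : h (e.symm x) = x := e.apply_symm_apply x
        have h5 : G b0 a (h (e.symm x)) = G b0 a x := by rw [h4]
        exact (h3.trans h5).symm) (by
      intro b hb
      rcases Nice.col (hN b0) (hN b) (G b0 a0) hu (G b a0) with ⟨h, hh⟩ | ⟨hi, h, hh⟩
      · exact ⟨h, fun x => LinearMap.congr_fun hh x⟩
      · have hhi : Function.Injective h := by
          rw [hh] at hu
          exact (hN b).uniform.inj_of_comp (G b a0) h hu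
        have hm := hmax (a0, b) (by simpa [T] using ⟨ha0, hi⟩)
        have hs := surj_of_len h hhi (by simp only at hm; omega)
        let e := LinearEquiv.ofBijective h ⟨hhi, hs⟩
        refine ⟨e.symm.toLinearMap, fun x => ?_⟩
        have h3 := LinearMap.congr_fun hh x
        show G b a0 x = e.symm (G b0 a0 x)
        rw [h3]
        exact (e.symm_apply_apply _).symm)
    refine ⟨φ.trans α.symm, ψ.trans β, insert a0 S, Function.update σ a0 b0, ?_, ?_, ?_, ?_⟩
    · rw [Finset.card_insert_of_notMem ha0, hS]
    · have hne : ∀ c ∈ S, c ≠ a0 := fun c hc h => ha0 (h ▸ hc)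
      intro c hc d hd hcd
      simp only [Finset.coe_insert, Set.mem_insert_iff, Finset.mem_coe] at hc hd
      rcases hc with rfl | hc <;> rcases hd with rfl | hd
      · rfl
      · rw [Function.update_self, Function.update_of_ne (hne d hd)] at hcd
        exact absurd hcd (hb0 d hd)
      · rw [Function.update_self, Function.update_of_ne (hne c hc)] at hcd
        exact absurd hcd.symm (hb0 c hc)
      · rw [Function.update_of_ne (hne c hc), Function.update_of_ne (hne d hd)] at hcd
        exact hσ hc hd hcd
    · intro a ha b hb x
      show β (g (α (Pi.single a x))) b = 0
      rcases Finset.mem_insert.mp ha with rfl | ha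
      · rw [Function.update_self] at hb
        exact hh3 x b hb
      · have hne : a ≠ a0 := fun h => ha0 (h ▸ ha)
        rw [Function.update_of_ne hne] at hb
        have hz : h a x = 0 := by
          apply hu
          rw [hG, ← hh1 a hne x, h1 a ha b0 (hb0 a ha), map_zero]
        rw [hh2 a hne, hz, h1 a ha b hb]
        simp
    · intro a ha c hc x
      show β (g (α (Pi.single a x))) _ = 0
      rw [Finset.mem_insert, not_or] at ha
      rw [hh2 a ha.1]
      rcases Finset.mem_insert.mp hc with rfl | hc
      · rw [Function.update_self, hh1 a ha.1, sub_self]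
      · rw [Function.update_of_ne (fun h : c = a0 => ha0 (h ▸ hc)), h2 a ha.2 c hc, h2 a0 ha0 c hc, sub_self]

end HaradaDiag

/-- Lemma 2.4.  Any injective homomorphism
`f : Q_1 ⊕ ⋯ ⊕ Q_k → Q'_1 ⊕ ⋯ ⊕ Q'_l` between direct sums of indecomposable projective
modules can be diagonalized: `k ≤ l` and there are automorphisms `φ`, `ψ` of source and
target and an injection `σ` such that `ψ ∘ f ∘ φ⁻¹` has zero `(b,a)`-component whenever
`b ≠ σ a`, and injective diagonal components. -/
theorem statement9 (K R : Type) [Field K] [IsAlgClosed K] [Ring R] [Algebra K R]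
    [FiniteDimensional K R] (H : HaradaData R) (k l : ℕ)
    (Q : Fin k → ModuleCat.{0} Rᵐᵒᵖ) (Q' : Fin l → ModuleCat.{0} Rᵐᵒᵖ)
    (hQ : ∀ a, Module.Finite Rᵐᵒᵖ ↥(Q a) ∧ Module.Projective Rᵐᵒᵖ ↥(Q a) ∧
      IsIndecomposableMod Rᵐᵒᵖ ↥(Q a))
    (hQ' : ∀ b, Module.Finite Rᵐᵒᵖ ↥(Q' b) ∧ Module.Projective Rᵐᵒᵖ ↥(Q' b) ∧
      IsIndecomposableMod Rᵐᵒᵖ ↥(Q' b))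
    (f : ((a : Fin k) → ↥(Q a)) →ₗ[Rᵐᵒᵖ] ((b : Fin l) → ↥(Q' b)))
    (hf : Function.Injective f) :
    k ≤ l ∧
    ∃ (φ : ((a : Fin k) → ↥(Q a)) ≃ₗ[Rᵐᵒᵖ] ((a : Fin k) → ↥(Q a)))
      (ψ : ((b : Fin l) → ↥(Q' b)) ≃ₗ[Rᵐᵒᵖ] ((b : Fin l) → ↥(Q' b)))
      (σ : Fin k ↪ Fin l),
      (∀ (a : Fin k) (b : Fin l), b ≠ σ a →
        (LinearMap.proj b).comp
          ((ψ.toLinearMap.comp (f.comp φ.symm.toLinearMap)).comp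
            (LinearMap.single Rᵐᵒᵖ (fun a => ↥(Q a)) a)) = 0) ∧
      (∀ a : Fin k,
        Function.Injective
          ((LinearMap.proj (σ a)).comp
            ((ψ.toLinearMap.comp (f.comp φ.symm.toLinearMap)).comp
              (LinearMap.single Rᵐᵒᵖ (fun a => ↥(Q a)) a)))) := by
  have : IsArtinianRing Rᵐᵒᵖ := IsArtinianRing.of_finite K Rᵐᵒᵖ
  have hM : ∀ a, HaradaDiag.Nice Rᵐᵒᵖ (Q a) := fun a => by
    obtain ⟨h1, h2, h3⟩ := hQ a
    exact HaradaDiag.nice_of_proj H (Q a) h3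
  have hN : ∀ b, HaradaDiag.Nice Rᵐᵒᵖ (Q' b) := fun b => by
    obtain ⟨h1, h2, h3⟩ := hQ' b
    exact HaradaDiag.nice_of_proj H (Q' b) h3
  obtain ⟨φ, ψ, S, σ, hS, hσ, h1, -⟩ :=
    HaradaDiag.partial_diag hM hN f hf (Fintype.card (Fin k)) le_rfl
  have hS' : S = Finset.univ := (Finset.card_eq_iff_eq_univ S).mp hS
  subst hS'
  have hinj : Function.Injective σ := fun a b h => hσ (by simp) (by simp) h
  refine ⟨by simpa using Fintype.card_le_of_injective σ hinj, φ, ψ, ⟨σ, hinj⟩, ?_, ?_⟩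
  · intro a b hb
    apply LinearMap.ext
    intro x
    exact h1 a (Finset.mem_univ a) b hb x
  · intro a
    rw [← LinearMap.ker_eq_bot, LinearMap.ker_eq_bot']
    intro x hx
    have h0 : ψ (f (φ.symm (Pi.single a x))) = 0 := by
      funext b
      by_cases hb : b = σ a
      · subst hb
        exact hx
      · exact h1 a (Finset.mem_univ a) b hb x
    rw [map_eq_zero_iff ψ ψ.injective, map_eq_zero_iff f hf,
      map_eq_zero_iff φ.symm φ.symm.injective] at h0
    simpa using h0
end

section
/- Let R be a basic left Harada algebra with idempotent data {e_{ij}} as below. Then the right ideal I := ⊕_{i=1}^m ⊕_{j=1}^{n_i} rad^{n_i - j + 1}(e_{ij}R) of R is a two-sided ideal of R. -/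
/-!
Common setup.  `K` is an algebraically closed field and `R` a finite-dimensional associative
unital `K`-algebra.  Right `R`-modules are formalized as modules over the opposite ring `Rᵐᵒᵖ`
(so that `MulOpposite.op r • x = x * r`).
-/

open MulOpposite

variable {R : Type} [Ring R]

section helpers

variable {A : Type} [Ring A]

/-- Powers of the Jacobson radical. -/
def jacPow (A : Type) [Ring A] : ℕ → Ideal A
  | 0 => ⊤
  | k + 1 => Ring.jacobson A * jacPow A k

theorem jacPow_zero_smul {M : Type} [AddCommGroup M] [Module A M] (N : Submodule A M) :
    jacPow A 0 • N = N := Submodule.top_smul N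

theorem jacPow_succ_smul {M : Type} [AddCommGroup M] [Module A M] (N : Submodule A M) (k : ℕ) :
    jacPow A (k + 1) • N = Ring.jacobson A • jacPow A k • N :=
  Submodule.mul_smul _ _ _

theorem jacPow_add_smul {M : Type} [AddCommGroup M] [Module A M] (N : Submodule A M)
    (a b : ℕ) : jacPow A (a + b) • N = jacPow A a • jacPow A b • N := by
  induction a with
  | zero => rw [jacPow_zero_smul, Nat.zero_add]
  | succ a ih => rw [Nat.succ_add, jacPow_succ_smul, ih, jacPow_succ_smul]

/-- Over an artinian ring the radical of a module is `M * J`. -/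
theorem jac_eq_smul [IsArtinianRing A] (M : Type) [AddCommGroup M] [Module A M] :
    Module.jacobson A M = Ring.jacobson A • (⊤ : Submodule A M) := by
  apply le_antisymm _ (Ring.jacobson_smul_top_le A M)
  apply Module.jacobson_le_of_eq_bot
  have h := Module.isTorsionBySet_quotient_ideal_smul M (Ring.jacobson A)
  let _ := h.module
  have : IsSemisimpleModule A (M ⧸ (Ring.jacobson A • (⊤ : Submodule A M))) :=
    (h.semilinearMap.isSemisimpleModule_iff_of_bijective Function.bijective_id).2
      inferInstance
  exact IsSemisimpleModule.jacobson_eq_bot _ _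

theorem radSub_eq_smul [IsArtinianRing A] {M : Type} [AddCommGroup M] [Module A M]
    (N : Submodule A M) : radSub N = Ring.jacobson A • N := by
  have : radSub N = Submodule.map N.subtype (Module.jacobson A N) := rfl
  rw [this, jac_eq_smul, Submodule.map_smul'', Submodule.map_top, Submodule.range_subtype]

theorem radSub_iterate [IsArtinianRing A] {M : Type} [AddCommGroup M] [Module A M]
    (N : Submodule A M) (k : ℕ) : radSub^[k] N = jacPow A k • N := by
  induction k with
  | zero => simp [jacPow_zero_smul]
  | succ k ih =>
    rw [Function.iterate_succ_apply', ih, radSub_eq_smul, jacPow_succ_smul]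

/-- An indecomposable projective module of finite length is local. -/
theorem local_of_indec {P : Type} [AddCommGroup P] [Module A P] [IsArtinian A P]
    [IsNoetherian A P] [Module.Projective A P] (hP : IsIndecomposableMod A P)
    (N : Submodule A P) : N = ⊤ ∨ N ≤ Module.jacobson A P := by
  by_contra! hcon
  obtain ⟨hN, hle⟩ := hcon
  have : ∃ M : Submodule A P, IsCoatom M ∧ ¬ N ≤ M := by
    by_contra! h
    exact hle (le_sInf fun M hM => h M hM)
  obtain ⟨M, hM, hNM⟩ := this
  have hsup : N ⊔ M = ⊤ := by
    rw [sup_comm]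
    exact hM.2 _ (lt_of_le_of_ne le_sup_left (fun h => hNM (h ▸ le_sup_right)))
  have hsurj : Function.Surjective (M.mkQ ∘ₗ N.subtype) := by
    intro y
    obtain ⟨x, rfl⟩ := M.mkQ_surjective y
    have hx : x ∈ N ⊔ M := hsup ▸ Submodule.mem_top
    obtain ⟨a, ha, b, hb, rfl⟩ := Submodule.mem_sup.mp hx
    refine ⟨⟨a, ha⟩, ?_⟩
    simp [hb]
  obtain ⟨f, hf⟩ := Module.projective_lifting_property _ M.mkQ hsurj
  let g : Module.End A P := N.subtype ∘ₗ f
  have hg : ∀ x, M.mkQ (g x) = M.mkQ x := fun x => LinearMap.congr_fun hf x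
  have hgn : ∀ n x, M.mkQ ((g ^ n) x) = M.mkQ x := by
    intro n
    induction n with
    | zero => intro x; simp
    | succ n ih => intro x; rw [pow_succ', Module.End.mul_apply, hg, ih]
  obtain ⟨k, hk⟩ := Filter.eventually_atTop.mp g.eventually_isCompl_ker_pow_range_pow
  have hc := hk (k + 1) (Nat.le_succ k)
  rcases hP.2 _ _ hc with h | h
  · have ht : LinearMap.range (g ^ (k + 1)) = ⊤ := by
      have := hc.sup_eq_top
      rwa [h, bot_sup_eq] at this
    apply hN
    rw [eq_top_iff, ← ht]
    rintro _ ⟨x, rfl⟩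
    rw [pow_succ', Module.End.mul_apply]
    exact (f ((g ^ k) x)).2
  · apply hM.1
    rw [eq_top_iff]
    intro x _
    have h1 := hgn (k + 1) x
    have h2 : (g ^ (k + 1)) x = 0 := by
      have : (g ^ (k + 1)) x ∈ LinearMap.range (g ^ (k + 1)) := ⟨x, rfl⟩
      rw [h] at this
      simpa using this
    rw [h2, map_zero] at h1
    exact (Submodule.Quotient.mk_eq_zero M).mp h1.symm

/-- A surjection from an indecomposable to a nonzero projective module is bijective. -/
theorem bij_of_surj {P Q : Type} [AddCommGroup P] [Module A P] [AddCommGroup Q] [Module A Q]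
    [Module.Projective A Q] [Nontrivial Q] (hP : IsIndecomposableMod A P)
    (f : P →ₗ[A] Q) (hf : Function.Surjective f) : Function.Bijective f := by
  obtain ⟨s, hs⟩ := Module.projective_lifting_property f LinearMap.id hf
  have hs' : ∀ x, f (s x) = x := fun x => LinearMap.congr_fun hs x
  have hc : IsCompl (LinearMap.ker f) (LinearMap.range s) := by
    constructor
    · rw [Submodule.disjoint_def]
      rintro _ hx ⟨y, rfl⟩
      rw [LinearMap.mem_ker, hs'] at hx
      simp [hx]
    · rw [codisjoint_iff, eq_top_iff]
      intro x _
      refine Submodule.mem_sup.mpr ⟨x - s (f x), ?_, s (f x), ⟨_, rfl⟩, by simp⟩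
      simp [hs']
  rcases hP.2 _ _ hc with h | h
  · exact ⟨LinearMap.ker_eq_bot.mp h, hf⟩
  · exfalso
    obtain ⟨y, hy⟩ := exists_ne (0 : Q)
    apply hy
    have : s y ∈ LinearMap.range s := ⟨y, rfl⟩
    rw [h, Submodule.mem_bot] at this
    rw [← hs' y, this, map_zero]

end helpers

theorem mem_rightIdeal {S : Type} [Ring S] {x y : S} :
    y ∈ rightIdeal S x ↔ ∃ r, x * r = y := by
  unfold rightIdeal
  rw [Submodule.mem_span_singleton]
  constructor
  · rintro ⟨a, rfl⟩
    exact ⟨unop a, rfl⟩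
  · rintro ⟨r, rfl⟩
    exact ⟨op r, rfl⟩

/-- Left multiplication as a map of right modules. -/
def leftMul {S : Type} [Ring S] (r : S) : S →ₗ[Sᵐᵒᵖ] S where
  toFun x := r * x
  map_add' := mul_add r
  map_smul' a x := by
    induction a with
    | h a => simp [mul_assoc]

theorem projective_self (S : Type) [Ring S] : Module.Projective Sᵐᵒᵖ S := by
  let f : Sᵐᵒᵖ →ₗ[Sᵐᵒᵖ] S :=
    { toFun := unop
      map_add' := fun _ _ => rfl
      map_smul' := fun _ _ => rfl }
  exact Module.Projective.of_equiv (LinearEquiv.ofBijective f unop_bijective)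

theorem projective_rightIdeal {S : Type} [Ring S] {x : S} (hx : IsIdempotentElem x) :
    Module.Projective Sᵐᵒᵖ (rightIdeal S x) := by
  have := projective_self S
  refine Module.Projective.of_split (rightIdeal S x).subtype
    ((leftMul x).codRestrict (rightIdeal S x) fun c => mem_rightIdeal.mpr ⟨c, rfl⟩) ?_
  ext ⟨y, hy⟩
  obtain ⟨r, rfl⟩ := mem_rightIdeal.mp hy
  change x * (x * r) = x * r
  rw [← mul_assoc, hx.eq]

theorem HaradaData.exists_embed {S : Type} [Ring S] [IsArtinianRing Sᵐᵒᵖ] (H : HaradaData S)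
    (i : Fin H.m) (t : ℕ) (ht : t < H.n i) :
    ∃ φ : rightIdeal S (H.e i ⟨t, ht⟩) →ₗ[Sᵐᵒᵖ] rightIdeal S (H.e i ⟨0, H.hn i⟩),
      Function.Injective φ ∧ LinearMap.range φ = jacPow Sᵐᵒᵖ t • ⊤ := by
  induction t with
  | zero =>
    refine ⟨LinearMap.id, Function.injective_id, ?_⟩
    simp [jacPow_zero_smul]
  | succ t ih =>
    obtain ⟨φ, hφ, hr⟩ := ih (Nat.lt_of_succ_lt ht)
    obtain ⟨ψ⟩ := H.rad_iso i ⟨t + 1, ht⟩ (Nat.succ_pos t)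
    change rightIdeal S (H.e i ⟨t + 1, ht⟩) ≃ₗ[Sᵐᵒᵖ]
      radSub (rightIdeal S (H.e i ⟨t, Nat.lt_of_succ_lt ht⟩)) at ψ
    have hle : radSub (rightIdeal S (H.e i ⟨t, Nat.lt_of_succ_lt ht⟩)) ≤
        rightIdeal S (H.e i ⟨t, Nat.lt_of_succ_lt ht⟩) := by
      rw [radSub_eq_smul]; exact Submodule.smul_le_right
    refine ⟨φ ∘ₗ Submodule.inclusion hle ∘ₗ ψ.toLinearMap, ?_, ?_⟩
    · exact hφ.comp ((Submodule.inclusion_injective hle).comp ψ.injective)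
    · have h1 : LinearMap.range (Submodule.inclusion hle) = Ring.jacobson Sᵐᵒᵖ • ⊤ := by
        apply Submodule.map_injective_of_injective
          (rightIdeal S (H.e i ⟨t, Nat.lt_of_succ_lt ht⟩)).injective_subtype
        rw [Submodule.map_smul'', Submodule.map_top, Submodule.range_subtype,
          ← LinearMap.range_comp, Submodule.subtype_comp_inclusion, Submodule.range_subtype,
          radSub_eq_smul]
      rw [LinearMap.range_comp, LinearMap.range_comp, LinearEquiv.range, Submodule.map_top, h1,
        Submodule.map_smul'', Submodule.map_top, hr, jacPow_succ_smul]

theorem HaradaData.range_le {S : Type} [Ring S] [IsArtinianRing Sᵐᵒᵖ] (H : HaradaData S)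
    (i k : Fin H.m) (hik : i ≠ k)
    (h : rightIdeal S (H.e i ⟨0, H.hn i⟩) →ₗ[Sᵐᵒᵖ] rightIdeal S (H.e k ⟨0, H.hn k⟩))
    (t : ℕ) (ht : t ≤ H.n k) :
    LinearMap.range h ≤ jacPow Sᵐᵒᵖ t • ⊤ := by
  induction t with
  | zero => simp [jacPow_zero_smul]
  | succ t ih =>
    have ht' : t < H.n k := ht
    have ih := ih ht'.le
    obtain ⟨φ, hφ, hr⟩ := H.exists_embed k t ht'
    rw [← hr] at ih
    have := projective_rightIdeal (H.idem k ⟨t, ht'⟩)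
    have : Module.Finite Sᵐᵒᵖ (rightIdeal S (H.e k ⟨t, ht'⟩)) :=
      Module.Finite.iff_fg.mpr (Submodule.fg_span (Set.finite_singleton _))
    have := (H.indec k ⟨t, ht'⟩).1
    have hh : ∃ h' : rightIdeal S (H.e i ⟨0, H.hn i⟩) →ₗ[Sᵐᵒᵖ] rightIdeal S (H.e k ⟨t, ht'⟩),
        φ ∘ₗ h' = h := by
      refine ⟨(LinearEquiv.ofInjective φ hφ).symm.toLinearMap ∘ₗ
        h.codRestrict (LinearMap.range φ) (fun c => ih ⟨c, rfl⟩), ?_⟩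
      ext x : 1
      have := congrArg Subtype.val ((LinearEquiv.ofInjective φ hφ).apply_symm_apply
        (h.codRestrict (LinearMap.range φ) (fun c => ih ⟨c, rfl⟩) x))
      exact this
    obtain ⟨h', rfl⟩ := hh
    rcases local_of_indec (H.indec k ⟨t, ht'⟩) (LinearMap.range h') with h1 | h1
    · exfalso
      have hb := bij_of_surj (H.indec i ⟨0, H.hn i⟩) h' (LinearMap.range_eq_top.mp h1)
      refine (H.basic ⟨i, ⟨0, H.hn i⟩⟩ ⟨k, ⟨t, ht'⟩⟩ ?_).false (LinearEquiv.ofBijective h' hb)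
      intro he
      exact hik (congrArg Sigma.fst he)
    · rw [jac_eq_smul] at h1
      rw [LinearMap.range_comp]
      refine (Submodule.map_mono h1).trans ?_
      rw [Submodule.map_smul'', Submodule.map_top, hr, jacPow_succ_smul]

theorem HaradaData.hom_map_le {S : Type} [Ring S] [IsArtinianRing Sᵐᵒᵖ] (H : HaradaData S)
    (p q : Σ i : Fin H.m, Fin (H.n i))
    (g : rightIdeal S (H.e p.1 p.2) →ₗ[Sᵐᵒᵖ] rightIdeal S (H.e q.1 q.2)) :
    Submodule.map g (jacPow Sᵐᵒᵖ (H.n p.1 - p.2.val) • ⊤) ≤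
      jacPow Sᵐᵒᵖ (H.n q.1 - q.2.val) • ⊤ := by
  obtain ⟨i, j, hj⟩ := p
  obtain ⟨k, l, hl⟩ := q
  obtain ⟨φ, hφ, hφr⟩ := H.exists_embed i j hj
  obtain ⟨ψ, hψ, hψr⟩ := H.exists_embed k l hl
  obtain ⟨h, hh⟩ := (H.inj k).out φ hφ (ψ ∘ₗ g)
  have hh : h ∘ₗ φ = ψ ∘ₗ g := LinearMap.ext hh
  rw [← Submodule.map_le_map_iff_of_injective hψ, ← Submodule.map_comp, ← hh,
    Submodule.map_smul'', Submodule.map_top, LinearMap.range_comp, hφr,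
    Submodule.map_smul'', Submodule.map_top, Submodule.map_smul'', Submodule.map_top, hψr]
  dsimp only
  rw [← jacPow_add_smul, ← jacPow_add_smul,
    Nat.sub_add_cancel hj.le, Nat.sub_add_cancel hl.le]
  by_cases hik : i = k
  · subst hik
    exact Submodule.smul_mono le_rfl le_top
  · exact Submodule.smul_le_right.trans (H.range_le i k hik h _ le_rfl)

theorem HaradaData.mul_mem_I {S : Type} [Ring S] [IsArtinianRing Sᵐᵒᵖ] (H : HaradaData S)
    (r x : S) (hx : x ∈ H.I) : r * x ∈ H.I := by
  unfold HaradaData.I at hx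
  refine Submodule.iSup_induction _ (motive := fun x => r * x ∈ H.I) hx ?_ ?_ ?_
  · intro p y hy
    rw [← one_mul (r * y), ← H.sum_eq_one, Finset.sum_mul]
    refine Submodule.sum_mem _ fun q _ => ?_
    refine Submodule.mem_iSup_of_mem q ?_
    rw [radSub_iterate] at hy ⊢
    let g : rightIdeal S (H.e p.1 p.2) →ₗ[Sᵐᵒᵖ] rightIdeal S (H.e q.1 q.2) :=
      (leftMul (H.e q.1 q.2 * r) ∘ₗ (rightIdeal S (H.e p.1 p.2)).subtype).codRestrict _
        fun c => mem_rightIdeal.mpr ⟨r * c, (mul_assoc _ _ _).symm⟩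
    have key := Submodule.map_mono (f := (rightIdeal S (H.e q.1 q.2)).subtype)
      (H.hom_map_le p q g)
    rw [Submodule.map_smul'' _ ⊤ (rightIdeal S (H.e q.1 q.2)).subtype, Submodule.map_top,
      Submodule.range_subtype] at key
    apply key
    have hy' : y ∈ Submodule.map (rightIdeal S (H.e p.1 p.2)).subtype
        (jacPow Sᵐᵒᵖ (H.n p.1 - p.2.val) • ⊤) := by
      rwa [Submodule.map_smul'', Submodule.map_top, Submodule.range_subtype]
    obtain ⟨z, hz, rfl⟩ := hy'
    exact ⟨g z, ⟨z, hz, rfl⟩, mul_assoc _ _ _⟩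
  · rw [mul_zero]; exact Submodule.zero_mem _
  · intro a b ha hb
    rw [mul_add]; exact Submodule.add_mem _ ha hb

/-- Lemma 3.1.  The right ideal `I = ⊕_{i,j} rad^{n_i-j+1}(e_{ij}R)` is a
two-sided ideal of `R` (it is a right ideal by construction; here we assert closure under
left multiplication). -/
theorem statement10 (K R : Type) [Field K] [IsAlgClosed K] [Ring R] [Algebra K R]
    [FiniteDimensional K R] (H : HaradaData R) :
    ∀ r x : R, x ∈ H.I → r * x ∈ H.I := by
  have : IsArtinianRing Rᵐᵒᵖ := IsArtinianRing.of_finite K Rᵐᵒᵖ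
  exact fun r x hx => H.mul_mem_I r x hx
end
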